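/- With f(τ) := Σ_{n=1}^∞ (−1)^{n−1} n sin(2πn/3) exp(−(2π/3) n² τ) and E(τ) := e^{−πτ/6} ∏_{n=1}^∞ (1 − e^{−4πnτ}) for τ > 0, one has lim_{τ→0⁺} (8/√3) · τ · f(τ) / E(τ) = 1. (Equivalently, the exact non-disconnection probability formula P(τ) = (8τ/(√3 E(τ))) f(τ) satisfies P(τ) → 1 as τ → 0⁺.) -/

import Mathlib

open Real Filter Set

/-- `f τ = Σ_{n=1}^∞ (−1)^{n−1} n sin(2πn/3) exp(−(2π/3) n² τ)`. The `n = 0` term vanishes,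
and for `n ≥ 1` one has `(−1)^{n+1} = (−1)^{n−1}`. -/
noncomputable def f (τ : ℝ) : ℝ :=
  ∑' n : ℕ, (-1 : ℝ) ^ (n + 1) * n * Real.sin (2 * π * n / 3) * Real.exp (-(2 * π / 3) * n ^ 2 * τ)

/-- The Dedekind eta function `η(2iτ) = e^{−πτ/6} ∏_{n=1}^∞ (1 − e^{−4πnτ})`. -/
noncomputable def dedekindEta (τ : ℝ) : ℝ :=
  Real.exp (-π * τ / 6) * ∏' n : ℕ, (1 - Real.exp (-4 * π * (n + 1) * τ))

lemma f_eq_sinKernel {τ : ℝ} (hτ : 0 < τ) :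
    f τ = 1 / 2 * HurwitzZeta.sinKernel ((1 / 6 : ℝ) : UnitAddCircle) (2 * τ / 3) := by
  rw [← (HurwitzZeta.hasSum_nat_sinKernel (1 / 6) (by positivity : 0 < 2 * τ / 3)).tsum_eq,
    ← tsum_mul_left, f]
  refine tsum_congr fun n => ?_
  have h : (-1 : ℝ) ^ (n + 1) * sin (2 * π * n / 3) = sin (2 * π * (1 / 6) * n) := by
    have := sin_nat_mul_pi_sub (2 * π * n / 3) n
    rw [show (n : ℝ) * π - 2 * π * n / 3 = 2 * π * (1 / 6) * n by ring] at this
    rw [this]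
    ring
  rw [← h, show -(2 * π / 3) * (n : ℝ) ^ 2 * τ = -π * n ^ 2 * (2 * τ / 3) by ring]
  ring

lemma f_eq_oddKernel {x : ℝ} (hx : 0 < x) :
    f (1 / (2 * x)) = 1 / 2 * ((3 * x) ^ (3 / 2 : ℝ) *
      HurwitzZeta.oddKernel ((1 / 6 : ℝ) : UnitAddCircle) (3 * x)) := by
  rw [f_eq_sinKernel (by positivity), HurwitzZeta.oddKernel_functional_equation]
  have : (3 * x) ^ (3 / 2 : ℝ) ≠ 0 := by positivity
  rw [show 2 * (1 / (2 * x)) / 3 = 1 / (3 * x) by field_simp]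
  field_simp

lemma tendsto_exp_mul_oddKernel :
    Tendsto (fun x : ℝ => rexp (π * x / 12) *
      HurwitzZeta.oddKernel ((1 / 6 : ℝ) : UnitAddCircle) (3 * x)) atTop (nhds (1 / 6)) := by
  have key : Tendsto (fun x : ℝ => ∑' n : ℤ, ((n : ℝ) + 1 / 6) *
      rexp (-(π * (3 * (n : ℝ) ^ 2 + n)) * x)) atTop
      (nhds (∑' n : ℤ, if n = 0 then (1 / 6 : ℝ) else 0)) := by
    have hpos (n : ℤ) : (n : ℝ) ^ 2 ≤ 3 * (n : ℝ) ^ 2 + n := by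
      have h : -n ≤ n ^ 2 := by nlinarith [Int.le_self_sq (-n)]
      have h' : -(n : ℝ) ≤ (n : ℝ) ^ 2 := by exact_mod_cast h
      nlinarith [sq_nonneg (n : ℝ)]
    refine tendsto_tsum_of_dominated_convergence
      (bound := fun n : ℤ => |(n : ℝ) + 1 / 6| * rexp (-(π * (3 * (n : ℝ) ^ 2 + n)))) ?_ ?_ ?_
    · have := ((HurwitzZeta.hasSum_int_oddKernel (1 / 6)
        (by norm_num : (0 : ℝ) < 3)).summable.abs).mul_left (rexp (π / 12))
      refine this.congr fun n => ?_
      rw [abs_mul, Real.abs_exp, mul_left_comm, ← Real.exp_add]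
      congr 2
      ring
    · intro n
      rcases eq_or_ne n 0 with rfl | hn
      · simp
      · have hn' : (n : ℝ) ≠ 0 := by exact_mod_cast hn
        have hc : 0 < π * (3 * (n : ℝ) ^ 2 + n) :=
          mul_pos pi_pos (lt_of_lt_of_le (by positivity) (hpos n))
        have := tendsto_exp_atBot.comp (tendsto_id.const_mul_atTop_of_neg (neg_lt_zero.mpr hc))
        simpa [hn] using this.const_mul ((n : ℝ) + 1 / 6)
    · filter_upwards [eventually_ge_atTop 1] with x hx n
      rw [norm_mul, Real.norm_eq_abs, Real.norm_eq_abs, Real.abs_exp]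
      gcongr
      have : 0 ≤ π * (3 * (n : ℝ) ^ 2 + n) :=
        mul_nonneg pi_pos.le ((sq_nonneg _).trans (hpos n))
      nlinarith
  rw [tsum_ite_eq] at key
  refine key.congr' ?_
  filter_upwards [eventually_gt_atTop 0] with x hx
  rw [← (HurwitzZeta.hasSum_int_oddKernel (1 / 6) (by positivity : 0 < 3 * x)).tsum_eq,
    ← tsum_mul_left]
  refine tsum_congr fun n => ?_
  rw [mul_left_comm, ← Real.exp_add]
  congr 2
  ring

lemma ofReal_dedekindEta {τ : ℝ} (hτ : 0 < τ) :
    (dedekindEta τ : ℂ) = ModularForm.eta (2 * τ * Complex.I) := by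
  have hm : Multipliable fun n : ℕ => 1 - rexp (-4 * π * (n + 1) * τ) := by
    simp only [sub_eq_add_neg]
    refine multipliable_one_add_of_summable ?_
    have hr : rexp (-4 * π * τ) < 1 := by
      rw [Real.exp_lt_one_iff]
      nlinarith [mul_pos pi_pos hτ]
    refine ((summable_nat_add_iff 1).mpr
      (summable_geometric_of_lt_one (exp_pos _).le hr)).congr fun n => ?_
    rw [norm_neg, Real.norm_eq_abs, Real.abs_exp, ← Real.exp_nat_mul]
    push_cast
    ring_nf
  have hprod : ((∏' n : ℕ, (1 - rexp (-4 * π * (n + 1) * τ)) : ℝ) : ℂ) =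
      ∏' n : ℕ, (1 - ModularForm.eta_q n (2 * τ * Complex.I)) := by
    rw [← Complex.ofRealHom_eq_coe, hm.map_tprod Complex.ofRealHom Complex.continuous_ofReal]
    refine tprod_congr fun n => ?_
    rw [ModularForm.eta_q_eq_cexp, Complex.ofRealHom_eq_coe]
    push_cast
    congr 2
    linear_combination (-4 * π * (n + 1) * τ : ℂ) * Complex.I_sq
  rw [dedekindEta, ModularForm.eta, Complex.ofReal_mul, hprod, Function.Periodic.qParam]
  push_cast
  congr 2
  linear_combination (-π * τ / 6 : ℂ) * Complex.I_sq

lemma dedekindEta_one_div {x : ℝ} (hx : 0 < x) :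
    dedekindEta (1 / (2 * x)) = √x * dedekindEta (x / 2) := by
  have h := ModularForm.eta_comp_eq_csqrt_I_inv (x := x * Complex.I) (by simpa using hx)
  have hx0 : (x : ℂ) ≠ 0 := by exact_mod_cast hx.ne'
  have hs : (Complex.sqrt Complex.I)⁻¹ * Complex.sqrt (x * Complex.I) = (√x : ℝ) := by
    rw [sqrt_eq_exp Complex.I_ne_zero,
      sqrt_eq_exp (mul_ne_zero hx0 Complex.I_ne_zero),
      Complex.log_ofReal_mul hx Complex.I_ne_zero, ← Complex.exp_neg, ← Complex.exp_add,
      sqrt_eq_rpow, rpow_def_of_pos hx]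
    push_cast
    congr 1
    ring
  have h1 : -1 / (x * Complex.I) = 2 * (1 / (2 * x) : ℝ) * Complex.I := by
    push_cast
    field_simp
    simp
  have h2 : x * Complex.I = 2 * (x / 2 : ℝ) * Complex.I := by
    push_cast
    ring
  rw [← Complex.ofReal_inj, Complex.ofReal_mul, ofReal_dedekindEta (by positivity),
    ofReal_dedekindEta (by positivity), ← h1, ← h2, ← hs]
  simpa [mul_assoc] using h

lemma tendsto_exp_mul_dedekindEta :
    Tendsto (fun x : ℝ => rexp (π * x / 12) * dedekindEta (x / 2)) atTop (nhds 1) := by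
  have key : Tendsto (fun x : ℝ => ∏' n : ℕ, (1 + -rexp (-(2 * π * (n + 1)) * x))) atTop
      (nhds (∏' n : ℕ, (1 + 0))) := by
    refine tendsto_tprod_one_add_of_dominated_convergence
      (bound := fun n : ℕ => rexp (-1) ^ (n + 1)) ?_ ?_ ?_
    · exact (summable_nat_add_iff 1).mpr
        (summable_geometric_of_lt_one (exp_pos _).le (by simp))
    · intro n
      have := tendsto_exp_atBot.comp (tendsto_id.const_mul_atTop_of_neg
        (neg_lt_zero.mpr (by positivity : 0 < 2 * π * ((n : ℝ) + 1))))
      simpa using this.neg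
    · filter_upwards [eventually_ge_atTop 1] with x hx n
      rw [norm_neg, Real.norm_eq_abs, Real.abs_exp, ← Real.exp_nat_mul, Real.exp_le_exp]
      push_cast
      have : 1 ≤ 2 * π * x := by nlinarith [pi_gt_three]
      nlinarith
  simp only [add_zero, tprod_one] at key
  refine key.congr fun x => ?_
  rw [dedekindEta, ← mul_assoc, ← Real.exp_add,
    show π * x / 12 + -π * (x / 2) / 6 = 0 by ring, Real.exp_zero, one_mul]
  refine tprod_congr fun n => ?_
  rw [← sub_eq_add_neg]
  congr 2
  ring

/-- The exact non-disconnection probability `P(τ) = (8τ/(√3 η(2iτ))) f(τ)` satisfies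
`P(τ) → 1` as `τ → 0⁺`. -/
theorem P_tendsto_one_at_zero :
    Tendsto (fun τ : ℝ => 8 / Real.sqrt 3 * τ * f τ / dedekindEta τ)
      (nhdsWithin 0 (Ioi 0)) (nhds 1) := by
  have hlim := ((tendsto_exp_mul_oddKernel.div tendsto_exp_mul_dedekindEta one_ne_zero).const_mul
    6).comp (tendsto_inv_nhdsGT_zero.const_mul_atTop (by norm_num : (0 : ℝ) < 1 / 2))
  norm_num at hlim
  refine hlim.congr' ?_
  filter_upwards [self_mem_nhdsWithin] with τ hτ
  obtain ⟨x, hx, rfl⟩ : ∃ x : ℝ, 0 < x ∧ τ = 1 / (2 * x) :=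
    ⟨1 / (2 * τ), by have : 0 < τ := hτ; positivity, by field_simp⟩
  have hpow : (3 * x) ^ (3 / 2 : ℝ) = 3 * x * (√3 * √x) := by
    rw [show (3 / 2 : ℝ) = 1 + 1 / 2 by norm_num, rpow_add (by positivity), rpow_one,
      ← sqrt_eq_rpow, sqrt_mul (by norm_num)]
  rw [f_eq_oddKernel hx, dedekindEta_one_div hx, hpow]
  have h2x : 1 / 2 * (1 / (2 * x))⁻¹ = x := by field_simp
  have h3 : √3 ≠ 0 := by positivity
  have hx2 : √x ≠ 0 := by positivity
  simp only [Function.comp_apply, h2x]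
  field_simp
  ring
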